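/- Let α ∈ ℂ with α ≠ 0, let l ≥ 1, and let W : ℤ × ℤ → ((Fin (l+1) → ℂ) → ℂ) be a family of functions such that for every solution u of B_α with u(n,m) ≠ 0 for all n,m one has W(n+1,m)(u(n+1,m), u(n+1,m+1), …, u(n+1,m+l)) = W(n,m)(u(n,m), u(n,m+1), …, u(n,m+l)) for all n,m ∈ ℤ. Then for every solution v of L_α with v(n,m) ≠ 0 for all n,m, the function Ŵ(n,m) := W(n,m)(v(n+1,m)/v(n,m), v(n+1,m+1)/v(n,m+1), …, v(n+1,m+l)/v(n,m+l)) satisfies Ŵ(n+1,m) = Ŵ(n,m) for all n,m ∈ ℤ. -/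

import Mathlib

/-- `v` is a solution of the linear equation `L_α`. -/
def LinSol (α : ℂ) (v : ℤ → ℤ → ℂ) : Prop :=
  ∀ n m : ℤ, v (n + 1) (m + 1) + v n (m + 1) = α ^ n * (v (n + 1) m - v n m)

/-- `u` is a solution of the discrete Burgers-type equation `B_α`. -/
def BurSol (α : ℂ) (u : ℤ → ℤ → ℂ) : Prop :=
  ∀ n m : ℤ, (u (n + 1) (m + 1) + 1) * (u n m - 1) * u n (m + 1)
    = α * (u n (m + 1) + 1) * (u (n + 1) m - 1) * u n m

/-- The Hopf–Cole transform maps nowhere vanishing solutions of `L_α` to solutions of `B_α`. -/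
theorem LinSol.burSol_div {α : ℂ} (hα : α ≠ 0) {v : ℤ → ℤ → ℂ} (hv : LinSol α v)
    (hv0 : ∀ n m : ℤ, v n m ≠ 0) : BurSol α (fun n m => v (n + 1) m / v n m) := by
  intro n m
  have h₀ := hv n m
  have h₁ := hv (n + 1) m
  rw [zpow_add_one₀ hα] at h₁
  have ha := hv0 n m
  have hb := hv0 (n + 1) m
  have ha' := hv0 n (m + 1)
  have hb' := hv0 (n + 1) (m + 1)
  beta_reduce
  field_simp
  linear_combination (v (n + 1) m - v n m) * h₁ - α * (v (n + 1 + 1) m - v (n + 1) m) * h₀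

/-- The `m`-direction first-integral invariance of `B_α` transfers, through the
Hopf–Cole transform `u(n,m) = v(n+1,m)/v(n,m)`, to an invariant of `L_α`. -/
theorem first_integral_transfer_m_direction (α : ℂ) (hα : α ≠ 0) (l : ℕ) (hl : 1 ≤ l)
    (W : ℤ → ℤ → (Fin (l + 1) → ℂ) → ℂ)
    (hW : ∀ u : ℤ → ℤ → ℂ, BurSol α u → (∀ n m : ℤ, u n m ≠ 0) → ∀ n m : ℤ,
      W (n + 1) m (fun i => u (n + 1) (m + ((i : ℕ) : ℤ)))
        = W n m (fun i => u n (m + ((i : ℕ) : ℤ))))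
    (v : ℤ → ℤ → ℂ) (hv : LinSol α v) (hv0 : ∀ n m : ℤ, v n m ≠ 0) :
    ∀ n m : ℤ,
      W (n + 1) m (fun i => v (n + 2) (m + ((i : ℕ) : ℤ)) / v (n + 1) (m + ((i : ℕ) : ℤ)))
        = W n m (fun i => v (n + 1) (m + ((i : ℕ) : ℤ)) / v n (m + ((i : ℕ) : ℤ))) := by
  intro n m
  have h := hW _ (hv.burSol_div hα hv0) (fun n m => div_ne_zero (hv0 (n + 1) m) (hv0 n m)) n m
  rwa [show n + 1 + 1 = n + 2 by ring] at h
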